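/- There is a universal constant c > 0 such that the following holds. Let p ∈ (0,1), t ≥ 3p, μ > 0, and let G = p·δ_1 + (1−p)·δ_s with s = cμ/√t. Then H²( f_{−μ,G}, f_{μ,G} ) ≤ 2p + (1−p)·H²( N(−μ, c²μ²/t), N(μ, c²μ²/t) ) ≤ t. Consequently, the Hellinger modulus of continuity satisfies ω_{H²,G}(t) = ∞ when t ≥ 3p, so the restriction t = O(p) in the modulus bound for subset-of-signals priors is necessary. -/

import Mathlib

open MeasureTheory ProbabilityTheory
open scoped ENNReal NNReal

/-- The standard normal density `φ`. -/
noncomputable def stdNormalPDF (u : ℝ) : ℝ :=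
  Real.exp (-u ^ 2 / 2) / Real.sqrt (2 * Real.pi)

/-- The normal scale mixture density `f_{μ,G}`. -/
noncomputable def mixDensity (μ : ℝ) (G : Measure ℝ) (x : ℝ) : ℝ :=
  ∫ σ, (1 / σ) * stdNormalPDF ((x - μ) / σ) ∂G

/-- The squared Hellinger distance between two densities on `ℝ`. -/
noncomputable def hellingerSq (p q : ℝ → ℝ) : ℝ :=
  ∫ x, (Real.sqrt (p x) - Real.sqrt (q x)) ^ 2

/-- The Hellinger modulus of continuity `ω_{H²,G}(t)` of the location family generated
by `G`, valued in `ℝ≥0∞`. -/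
noncomputable def modulusEnn (G : Measure ℝ) (t : ℝ) : ℝ≥0∞ :=
  ⨆ (μ₁ : ℝ) (μ₂ : ℝ) (_ : hellingerSq (mixDensity μ₁ G) (mixDensity μ₂ G) ≤ t),
    ENNReal.ofReal |μ₁ - μ₂|

/-- `G` is a probability measure supported in `[σmin, σmax]`. -/
def IsPriorOn (σmin σmax : ℝ) (G : Measure ℝ) : Prop :=
  IsProbabilityMeasure G ∧ G (Set.Icc σmin σmax)ᶜ = 0

/-- The mixture log-likelihood of the data `X` at parameters `(μ, G)`. -/
noncomputable def logLik {n : ℕ} (X : Fin n → ℝ) (μ : ℝ) (G : Measure ℝ) : ℝ :=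
  ∑ i, Real.log (mixDensity μ G (X i))

/-- `(μh, Gh)` is a joint maximizer of the mixture likelihood over `μ ∈ ℝ` and
probability measures `G` supported in `[σmin, σmax]`; `μh` is then the
empirical Bayes profile MLE. -/
def IsProfileMLE {n : ℕ} (σmin σmax : ℝ) (X : Fin n → ℝ) (μh : ℝ) (Gh : Measure ℝ) : Prop :=
  IsPriorOn σmin σmax Gh ∧
    ∀ (μ' : ℝ) (G : Measure ℝ), IsPriorOn σmin σmax G → logLik X μ' G ≤ logLik X μh Gh

/-- The empirical distribution `G_n = (1/n) ∑ δ_{σ i}`. -/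
noncomputable def empMeasure {n : ℕ} (σ : Fin n → ℝ) : Measure ℝ :=
  (n : ℝ≥0∞)⁻¹ • ∑ i, Measure.dirac (σ i)

/-!
The squared Hellinger distance is jointly subadditive and positively homogeneous, so the distance
between two location shifts of `p δ_σ + (1 - p) δ_τ` is at most `p` times the distance between the
`σ`-components, which never exceeds `2`, plus `1 - p` times that between the `τ`-components.
For shifts `±μ` and `τ = c μ / √t`, the latter distance `2 - 2 exp (-t / (2 c²))` is at most
`t / c²`, whatever the size of `μ`. The total is therefore at most `2 p + t / c² ≤ 2 t / 3 + t / 3`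
once `3 p ≤ t` and `3 ≤ c²`; since `μ` is arbitrary, the modulus at `t` is unbounded.
-/

section Hellinger

lemma sq_sqrt_add_sub_sqrt_add_le {a b a' b' : ℝ} (ha : 0 ≤ a) (hb : 0 ≤ b) (ha' : 0 ≤ a')
    (hb' : 0 ≤ b') : (√(a + b) - √(a' + b')) ^ 2 ≤ (√a - √a') ^ 2 + (√b - √b') ^ 2 := by
  have cauchySchwarz : √a * √a' + √b * √b' ≤ √(a + b) * √(a' + b') := by
    simpa [Fin.forall_fin_two, ha, hb, ha', hb'] using
      Real.sum_sqrt_mul_sqrt_le Finset.univ (f := ![a, b]) (g := ![a', b'])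
  linarith [sub_sq √(a + b) √(a' + b'), sub_sq √a √a', sub_sq √b √b', Real.sq_sqrt ha,
    Real.sq_sqrt hb, Real.sq_sqrt ha', Real.sq_sqrt hb', Real.sq_sqrt (add_nonneg ha hb),
    Real.sq_sqrt (add_nonneg ha' hb')]

lemma memLp_two_sqrt_of_integrable {α : Type*} [MeasurableSpace α] {ν : Measure α} {f : α → ℝ}
    (hf : Integrable f ν) : MemLp (fun x ↦ √(f x)) 2 ν := by
  refine (memLp_two_iff_integrable_sq
    (Real.continuous_sqrt.comp_aestronglyMeasurable hf.aestronglyMeasurable)).2 ?_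
  simpa only [Real.sq_sqrt', sup_comm] using hf.pos_part

variable {p q p₁ p₂ q₁ q₂ : ℝ → ℝ}

lemma integrable_sq_sqrt_sub_sqrt (hp : Integrable p) (hq : Integrable q) :
    Integrable fun x ↦ (√(p x) - √(q x)) ^ 2 :=
  ((memLp_two_sqrt_of_integrable hp).sub (memLp_two_sqrt_of_integrable hq)).integrable_sq

lemma hellingerSq_add_le (hp₁ : Integrable p₁) (hp₂ : Integrable p₂) (hq₁ : Integrable q₁)
    (hq₂ : Integrable q₂) (hp₁_nonneg : 0 ≤ p₁) (hp₂_nonneg : 0 ≤ p₂) (hq₁_nonneg : 0 ≤ q₁)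
    (hq₂_nonneg : 0 ≤ q₂) :
    hellingerSq (p₁ + p₂) (q₁ + q₂) ≤ hellingerSq p₁ q₁ + hellingerSq p₂ q₂ := by
  have h₁ := integrable_sq_sqrt_sub_sqrt hp₁ hq₁
  have h₂ := integrable_sq_sqrt_sub_sqrt hp₂ hq₂
  unfold hellingerSq
  rw [← integral_add h₁ h₂]
  exact integral_mono (integrable_sq_sqrt_sub_sqrt (hp₁.add hp₂) (hq₁.add hq₂)) (h₁.add h₂)
    fun x ↦ sq_sqrt_add_sub_sqrt_add_le (hp₁_nonneg x) (hp₂_nonneg x) (hq₁_nonneg x)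
      (hq₂_nonneg x)

lemma hellingerSq_smul {a : ℝ} (ha : 0 ≤ a) (p q : ℝ → ℝ) :
    hellingerSq (a • p) (a • q) = a * hellingerSq p q := by
  simp only [hellingerSq, Pi.smul_apply, smul_eq_mul, Real.sqrt_mul ha, ← mul_sub, mul_pow,
    Real.sq_sqrt ha, integral_const_mul]

lemma hellingerSq_eq_integral_add_sub (hp : Integrable p) (hq : Integrable q) (hp_nonneg : 0 ≤ p)
    (hq_nonneg : 0 ≤ q) :
    hellingerSq p q = (∫ x, p x) + (∫ x, q x) - 2 * ∫ x, √(p x * q x) := by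
  have expand (x : ℝ) : (√(p x) - √(q x)) ^ 2 = p x + q x - 2 * √(p x * q x) := by
    rw [sub_sq, Real.sq_sqrt (hp_nonneg x), Real.sq_sqrt (hq_nonneg x),
      Real.sqrt_mul (hp_nonneg x)]
    ring
  have hadd : Integrable fun x ↦ p x + q x := hp.add hq
  have hpq : Integrable fun x ↦ √(p x * q x) := by
    simp only [Real.sqrt_mul (hp_nonneg _)]
    exact (memLp_two_sqrt_of_integrable hp).integrable_mul (memLp_two_sqrt_of_integrable hq)
  simp only [hellingerSq, expand]
  rw [integral_sub hadd (hpq.const_mul 2), integral_add hp hq, integral_const_mul]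

end Hellinger

section Gaussian

lemma sqrt_gaussianPDFReal_mul_gaussianPDFReal (m₁ m₂ : ℝ) {v : ℝ≥0} (hv : v ≠ 0) (x : ℝ) :
    √(gaussianPDFReal m₁ v x * gaussianPDFReal m₂ v x) =
      Real.exp (-(m₁ - m₂) ^ 2 / (8 * v)) * gaussianPDFReal ((m₁ + m₂) / 2) v x := by
  have hexp : Real.exp (-(x - m₁) ^ 2 / (2 * v)) * Real.exp (-(x - m₂) ^ 2 / (2 * v)) =
      (Real.exp (-(m₁ - m₂) ^ 2 / (8 * v)) *
        Real.exp (-(x - (m₁ + m₂) / 2) ^ 2 / (2 * v))) ^ 2 := by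
    rw [← Real.exp_add, ← Real.exp_add, ← Real.exp_nat_mul]
    congr 1
    push_cast
    field_simp
    ring
  rw [Real.sqrt_eq_iff_mul_self_eq_of_pos (mul_pos (Real.exp_pos _) (gaussianPDFReal_pos _ v x hv))]
  simp only [gaussianPDFReal]
  linear_combination -(√(2 * Real.pi * v))⁻¹ ^ 2 * hexp

lemma hellingerSq_gaussianPDFReal (m₁ m₂ : ℝ) {v : ℝ≥0} (hv : v ≠ 0) :
    hellingerSq (gaussianPDFReal m₁ v) (gaussianPDFReal m₂ v) =
      2 - 2 * Real.exp (-(m₁ - m₂) ^ 2 / (8 * v)) := by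
  rw [hellingerSq_eq_integral_add_sub (integrable_gaussianPDFReal _ _)
    (integrable_gaussianPDFReal _ _) (gaussianPDFReal_nonneg _ _) (gaussianPDFReal_nonneg _ _)]
  simp only [sqrt_gaussianPDFReal_mul_gaussianPDFReal m₁ m₂ hv, integral_const_mul,
    integral_gaussianPDFReal_eq_one _ hv, mul_one]
  norm_num

lemma hellingerSq_gaussianPDFReal_le_two (m₁ m₂ : ℝ) {v : ℝ≥0} (hv : v ≠ 0) :
    hellingerSq (gaussianPDFReal m₁ v) (gaussianPDFReal m₂ v) ≤ 2 := by
  rw [hellingerSq_gaussianPDFReal m₁ m₂ hv]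
  linarith [Real.exp_pos (-(m₁ - m₂) ^ 2 / (8 * v))]

lemma one_div_mul_stdNormalPDF (m x : ℝ) {σ : ℝ} (hσ : 0 ≤ σ) :
    1 / σ * stdNormalPDF ((x - m) / σ) = gaussianPDFReal m (σ ^ 2).toNNReal x := by
  rw [stdNormalPDF, gaussianPDFReal, Real.coe_toNNReal _ (sq_nonneg σ),
    Real.sqrt_mul (by positivity) (σ ^ 2), Real.sqrt_sq hσ]
  ring_nf

end Gaussian

/-- The two-point prior `p δ_σ + (1 - p) δ_τ` on scales, meant for `p ∈ [0, 1]`: it is the prior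
that witnesses the failure of the modulus bound for large `t`. -/
noncomputable def twoPointPrior (p σ τ : ℝ) : Measure ℝ :=
  ENNReal.ofReal p • Measure.dirac σ + ENNReal.ofReal (1 - p) • Measure.dirac τ

namespace twoPointPrior

variable {p σ τ : ℝ}

lemma isProbabilityMeasure (hp : p ∈ Set.Icc 0 1) : IsProbabilityMeasure (twoPointPrior p σ τ) where
  measure_univ := by
    simp only [twoPointPrior, Measure.add_apply, Measure.smul_apply, measure_univ, smul_eq_mul,
      mul_one]
    rw [← ENNReal.ofReal_add hp.1 (sub_nonneg.2 hp.2), add_sub_cancel, ENNReal.ofReal_one]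

lemma apply_eq_zero {s : Set ℝ} (hσ : σ ∉ s) (hτ : τ ∉ s) : twoPointPrior p σ τ s = 0 := by
  simp [twoPointPrior, hσ, hτ]

lemma ofReal_le_apply {s : Set ℝ} (hσ : σ ∈ s) : ENNReal.ofReal p ≤ twoPointPrior p σ τ s := by
  simp [twoPointPrior, hσ]

lemma mixDensity_eq (m : ℝ) (hp : p ∈ Set.Icc 0 1) (hσ : 0 ≤ σ) (hτ : 0 ≤ τ) :
    mixDensity m (twoPointPrior p σ τ) =
      p • gaussianPDFReal m (σ ^ 2).toNNReal + (1 - p) • gaussianPDFReal m (τ ^ 2).toNNReal := by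
  ext x
  have integrable_weighted (w a : ℝ) :
      Integrable (fun s : ℝ ↦ 1 / s * stdNormalPDF ((x - m) / s))
        (ENNReal.ofReal w • Measure.dirac a) :=
    (integrable_dirac enorm_lt_top).smul_measure ENNReal.ofReal_ne_top
  rw [mixDensity, twoPointPrior,
    integral_add_measure (integrable_weighted _ _) (integrable_weighted _ _),
    integral_smul_measure, integral_smul_measure, integral_dirac, integral_dirac,
    one_div_mul_stdNormalPDF m x hσ, one_div_mul_stdNormalPDF m x hτ, ENNReal.toReal_ofReal hp.1,
    ENNReal.toReal_ofReal (sub_nonneg.2 hp.2)]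
  rfl

lemma hellingerSq_mixDensity_le (m₁ m₂ : ℝ) (hp : p ∈ Set.Icc 0 1) (hσ : 0 < σ) (hτ : 0 < τ) :
    hellingerSq (mixDensity m₁ (twoPointPrior p σ τ)) (mixDensity m₂ (twoPointPrior p σ τ)) ≤
      2 * p + (1 - p) * (2 - 2 * Real.exp (-(m₁ - m₂) ^ 2 / (8 * τ ^ 2))) := by
  have hq : 0 ≤ 1 - p := sub_nonneg.2 hp.2
  have var_ne_zero {s : ℝ} (hs : 0 < s) : (s ^ 2).toNNReal ≠ 0 :=
    (Real.toNNReal_pos.2 (pow_pos hs 2)).ne'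
  have weighted_integrable (a m : ℝ) (v : ℝ≥0) : Integrable (a • gaussianPDFReal m v) :=
    (integrable_gaussianPDFReal m v).smul a
  have weighted_nonneg {a : ℝ} (ha : 0 ≤ a) (m : ℝ) (v : ℝ≥0) : 0 ≤ a • gaussianPDFReal m v :=
    smul_nonneg ha (gaussianPDFReal_nonneg m v)
  rw [mixDensity_eq m₁ hp hσ.le hτ.le, mixDensity_eq m₂ hp hσ.le hτ.le]
  set v := (σ ^ 2).toNNReal
  set w := (τ ^ 2).toNNReal
  calc
    _ ≤ hellingerSq (p • gaussianPDFReal m₁ v) (p • gaussianPDFReal m₂ v) +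
        hellingerSq ((1 - p) • gaussianPDFReal m₁ w) ((1 - p) • gaussianPDFReal m₂ w) :=
      hellingerSq_add_le (weighted_integrable _ _ _) (weighted_integrable _ _ _)
        (weighted_integrable _ _ _) (weighted_integrable _ _ _)
        (weighted_nonneg hp.1 _ _) (weighted_nonneg hq _ _)
        (weighted_nonneg hp.1 _ _) (weighted_nonneg hq _ _)
    _ = p * hellingerSq (gaussianPDFReal m₁ v) (gaussianPDFReal m₂ v) +
        (1 - p) * hellingerSq (gaussianPDFReal m₁ w) (gaussianPDFReal m₂ w) := by
      rw [hellingerSq_smul hp.1, hellingerSq_smul hq]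
    _ ≤ p * 2 + (1 - p) * (2 - 2 * Real.exp (-(m₁ - m₂) ^ 2 / (8 * τ ^ 2))) := by
      rw [hellingerSq_gaussianPDFReal m₁ m₂ (var_ne_zero hτ), Real.coe_toNNReal _ (sq_nonneg τ)]
      gcongr
      · exact hp.1
      · exact hellingerSq_gaussianPDFReal_le_two m₁ m₂ (var_ne_zero hσ)
    _ = _ := by rw [mul_comm p 2]

lemma hellingerSq_mixDensity_neg_le {c t μ : ℝ} (hp : p ∈ Set.Icc 0 1) (hσ : 0 < σ) (hc : 0 < c)
    (ht : 0 < t) (hμ : 0 < μ) :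
    hellingerSq (mixDensity (-μ) (twoPointPrior p σ (c * μ / √t)))
        (mixDensity μ (twoPointPrior p σ (c * μ / √t))) ≤
      2 * p + (1 - p) * (2 - 2 * Real.exp (-(2 * μ) ^ 2 / (8 * (c ^ 2 * μ ^ 2 / t)))) := by
  convert hellingerSq_mixDensity_le (-μ) μ hp hσ (div_pos (mul_pos hc hμ) (Real.sqrt_pos.2 ht))
    using 7
  · ring
  · rw [div_pow, mul_pow, Real.sq_sqrt ht.le]

end twoPointPrior

lemma two_mul_add_one_sub_mul_two_sub_exp_le {c p t μ : ℝ} (hc : 3 ≤ c ^ 2) (hp : p ∈ Set.Icc 0 1)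
    (ht : 3 * p ≤ t) (hμ : μ ≠ 0) :
    2 * p + (1 - p) * (2 - 2 * Real.exp (-(2 * μ) ^ 2 / (8 * (c ^ 2 * μ ^ 2 / t)))) ≤ t := by
  have ht₀ : 0 ≤ t := by linarith [hp.1]
  have hq : 0 ≤ 1 - p := sub_nonneg.2 hp.2
  have exponent_eq : -(2 * μ) ^ 2 / (8 * (c ^ 2 * μ ^ 2 / t)) = -(t / (2 * c ^ 2)) := by
    have hc₀ : c ≠ 0 := by rintro rfl; norm_num at hc
    field_simp
    norm_num
  calc
    _ ≤ 2 * p + (1 - p) * (t / c ^ 2) := by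
      rw [exponent_eq]
      gcongr
      have two_mul_div : 2 * (t / (2 * c ^ 2)) = t / c ^ 2 := by ring
      linarith [Real.one_sub_le_exp_neg (t / (2 * c ^ 2))]
    _ ≤ 2 * p + 1 * (t / 3) := by gcongr; linarith [hp.1]
    _ ≤ t := by linarith

/-- The supremum at `t` of the Hellinger modulus over all subset-of-signals priors: probability
measures on `[0, ∞)` with mass at least `p` on `[0, 1]`. Such a prior is encoded as a measure on
`ℝ` that does not charge `(-∞, 0)`. -/
noncomputable def signalsModulus (p t : ℝ) : ℝ≥0∞ :=
  ⨆ (G : Measure ℝ) (_ : IsProbabilityMeasure G) (_ : G (Set.Iio 0) = 0)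
    (_ : ENNReal.ofReal p ≤ G (Set.Icc 0 1)), modulusEnn G t

lemma ofReal_abs_sub_le_modulusEnn {G : Measure ℝ} {t μ₁ μ₂ : ℝ}
    (h : hellingerSq (mixDensity μ₁ G) (mixDensity μ₂ G) ≤ t) :
    ENNReal.ofReal |μ₁ - μ₂| ≤ modulusEnn G t :=
  le_iSup_of_le μ₁ (le_iSup_of_le μ₂ (le_iSup_of_le h le_rfl))

lemma modulusEnn_twoPointPrior_le_signalsModulus {p σ τ : ℝ} (t : ℝ) (hp : p ∈ Set.Icc 0 1)
    (hσ : σ ∈ Set.Icc 0 1) (hτ : 0 ≤ τ) :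
    modulusEnn (twoPointPrior p σ τ) t ≤ signalsModulus p t :=
  le_iSup_of_le _ <| le_iSup_of_le (twoPointPrior.isProbabilityMeasure hp) <|
    le_iSup_of_le (twoPointPrior.apply_eq_zero hσ.1.not_gt hτ.not_gt) <|
      le_iSup_of_le (twoPointPrior.ofReal_le_apply hσ) le_rfl

lemma ofReal_two_mul_le_signalsModulus {p t μ : ℝ} (hp : p ∈ Set.Icc 0 1) (ht₀ : 0 < t)
    (ht : 3 * p ≤ t) (hμ : 0 < μ) : ENNReal.ofReal (2 * μ) ≤ signalsModulus p t := by
  have hellinger_le : hellingerSq (mixDensity (-μ) (twoPointPrior p 1 (2 * μ / √t)))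
      (mixDensity μ (twoPointPrior p 1 (2 * μ / √t))) ≤ t :=
    (twoPointPrior.hellingerSq_mixDensity_neg_le hp one_pos two_pos ht₀ hμ).trans
      (two_mul_add_one_sub_mul_two_sub_exp_le (by norm_num) hp ht hμ.ne')
  have abs_sub_eq : |-μ - μ| = 2 * μ := by rw [abs_of_neg (by linarith)]; ring
  calc
    ENNReal.ofReal (2 * μ) ≤ modulusEnn (twoPointPrior p 1 (2 * μ / √t)) t := by
      simpa only [abs_sub_eq] using ofReal_abs_sub_le_modulusEnn hellinger_le
    _ ≤ signalsModulus p t :=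
      modulusEnn_twoPointPrior_le_signalsModulus t hp ⟨zero_le_one, le_rfl⟩ (by positivity)

lemma signalsModulus_eq_top {p t : ℝ} (hp : p ∈ Set.Icc 0 1) (ht₀ : 0 < t) (ht : 3 * p ≤ t) :
    signalsModulus p t = ⊤ := by
  refine ENNReal.eq_top_of_forall_nnreal_le fun r ↦ ?_
  calc
    (r : ℝ≥0∞) = ENNReal.ofReal r := (ENNReal.ofReal_coe_nnreal).symm
    _ ≤ ENNReal.ofReal (2 * (r + 1)) := ENNReal.ofReal_le_ofReal (by linarith [r.coe_nonneg])
    _ ≤ signalsModulus p t := ofReal_two_mul_le_signalsModulus hp ht₀ ht (by positivity)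

/-- necessity of `t = O(p)` for the modulus bound. For the two-point
prior `G = p δ₁ + (1-p) δ_{cμ/√t}` with a suitable universal constant `c > 0` and
`t ≥ 3p`, one has
`H²(f_{-μ,G}, f_{μ,G}) ≤ 2p + (1-p) H²(N(-μ, c²μ²/t), N(μ, c²μ²/t)) ≤ t`
(using `H²(N(-μ,σ²), N(μ,σ²)) = 2 - 2 exp(-(2μ)²/(8σ²))`); consequently the Hellinger
modulus of continuity at `t` is infinite over subset-of-signals priors with mass `≥ p`
on `[0,1]`. -/
theorem stmt19 :
    ∃ c : ℝ, 0 < c ∧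
      ∀ p t μ : ℝ, p ∈ Set.Ioo (0 : ℝ) 1 → 3 * p ≤ t → 0 < μ →
        (hellingerSq
            (mixDensity (-μ)
              (ENNReal.ofReal p • Measure.dirac 1 +
                ENNReal.ofReal (1 - p) • Measure.dirac (c * μ / Real.sqrt t)))
            (mixDensity μ
              (ENNReal.ofReal p • Measure.dirac 1 +
                ENNReal.ofReal (1 - p) • Measure.dirac (c * μ / Real.sqrt t))) ≤
          2 * p + (1 - p) *
            (2 - 2 * Real.exp (-(2 * μ) ^ 2 / (8 * (c ^ 2 * μ ^ 2 / t))))) ∧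
        (2 * p + (1 - p) *
            (2 - 2 * Real.exp (-(2 * μ) ^ 2 / (8 * (c ^ 2 * μ ^ 2 / t)))) ≤ t) ∧
        (⨆ (G : Measure ℝ) (_ : IsProbabilityMeasure G) (_ : G (Set.Iio 0) = 0)
            (_ : ENNReal.ofReal p ≤ G (Set.Icc 0 1)), modulusEnn G t) = ⊤ := by
  refine ⟨2, two_pos, fun p t μ hp ht hμ ↦ ?_⟩
  have hp' : p ∈ Set.Icc 0 1 := Set.Ioo_subset_Icc_self hp
  have ht₀ : 0 < t := by linarith [hp.1]
  exact ⟨twoPointPrior.hellingerSq_mixDensity_neg_le hp' one_pos two_pos ht₀ hμ,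
    two_mul_add_one_sub_mul_two_sub_exp_le (by norm_num) hp' ht hμ.ne',
    signalsModulus_eq_top hp' ht₀ ht⟩
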